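/- arXiv:2509.07404 — 5 statements merged into one kernel-verified Lean document; each statement's English description precedes it below -/
import Mathlib

section
/- Let Q be a symmetric positive semidefinite n×n real matrix, q ∈ ℝⁿ, A ∈ ℝ^{m×n}, b ∈ ℝᵐ, G ∈ ℝ^{p×n}, d ∈ ℝᵖ. Fix θ = (θ_x,θ_y,θ_z) ∈ ℝⁿ×ℝᵐ×ℝᵖ, δ = (δ_x,δ_y,δ_z) with δ_x,δ_y,δ_z > 0, and ν > 0. Then the merit function L_δ(x,s;θ,ν) = ½ xᵀQx + qᵀx + ⟨θ_y, Ax − b⟩ + ⟨θ_z, Gx − d + s⟩ + (δ_x/2)‖x − θ_x‖² + (1/(2δ_y))‖Ax − b‖² + (1/(2δ_z))‖Gx − d + s‖² − ν Σᵢ log sᵢ is strictly convex on the convex set ℝⁿ × ℝ₊₊ᵖ, where ℝ₊₊ᵖ = {s ∈ ℝᵖ : sᵢ > 0 for all i}. -/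
open Matrix

/-!
Every summand of the merit function is convex: the quadratic forms because `Q` and the identity are
positive semidefinite and the residuals `Ax - b`, `Gx - d + s` are affine in `(x, s)`, the linear
terms trivially, and the barrier because `log` is concave. Two distinct points `(x, s) ≠ (x', s')`
differ in `x` or in `s`. In the first case the proximal term `(δx / 2) * ‖x - θx‖²` gives a strict
inequality (`dot_self_combo_lt`), in the second the barrier does (`sum_log_combo_lt`).
-/

/-- The convexity defect of a quadratic form: it equals `α * β` times the value of the form at
`u - v`. No symmetry of `M` is needed, since the cross terms on both sides agree. -/
lemma quad_combo {k : ℕ} (M : Matrix (Fin k) (Fin k) ℝ) (u v : Fin k → ℝ) {α β : ℝ}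
    (h : α + β = 1) :
    (α • u + β • v) ⬝ᵥ M.mulVec (α • u + β • v)
      = α * (u ⬝ᵥ M.mulVec u) + β * (v ⬝ᵥ M.mulVec v)
        - α * β * ((u - v) ⬝ᵥ M.mulVec (u - v)) := by
  obtain rfl : β = 1 - α := by linarith
  simp only [mulVec_add, mulVec_sub, mulVec_smul, dotProduct_add, add_dotProduct, dotProduct_sub,
    sub_dotProduct, smul_dotProduct, dotProduct_smul, smul_eq_mul]
  ring

lemma dot_self_combo {k : ℕ} (u v : Fin k → ℝ) {α β : ℝ} (h : α + β = 1) :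
    (α • u + β • v) ⬝ᵥ (α • u + β • v)
      = α * (u ⬝ᵥ u) + β * (v ⬝ᵥ v) - α * β * ((u - v) ⬝ᵥ (u - v)) := by
  simpa using quad_combo 1 u v h

lemma dot_self_nonneg {k : ℕ} (u : Fin k → ℝ) : 0 ≤ u ⬝ᵥ u :=
  Finset.sum_nonneg fun i _ => mul_self_nonneg (u i)

lemma dot_self_combo_le {k : ℕ} (u v : Fin k → ℝ) {α β : ℝ} (hα : 0 < α) (hβ : 0 < β)
    (h : α + β = 1) :
    (α • u + β • v) ⬝ᵥ (α • u + β • v) ≤ α * (u ⬝ᵥ u) + β * (v ⬝ᵥ v) := by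
  rw [dot_self_combo u v h]
  have := mul_nonneg (mul_pos hα hβ).le (dot_self_nonneg (u - v))
  linarith

lemma dot_self_combo_lt {k : ℕ} {u v : Fin k → ℝ} (huv : u ≠ v) {α β : ℝ} (hα : 0 < α)
    (hβ : 0 < β) (h : α + β = 1) :
    (α • u + β • v) ⬝ᵥ (α • u + β • v) < α * (u ⬝ᵥ u) + β * (v ⬝ᵥ v) := by
  rw [dot_self_combo u v h]
  have h0 : 0 < (u - v) ⬝ᵥ (u - v) :=
    (dot_self_nonneg _).lt_of_ne' fun h0 => huv (sub_eq_zero.1 (dotProduct_self_eq_zero.1 h0))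
  have := mul_pos (mul_pos hα hβ) h0
  linarith

lemma log_combo_le {s t α β : ℝ} (hs : 0 < s) (ht : 0 < t) (hα : 0 < α) (hβ : 0 < β)
    (h : α + β = 1) : α * Real.log s + β * Real.log t ≤ Real.log (α * s + β * t) :=
  strictConcaveOn_log_Ioi.concaveOn.2 hs ht hα.le hβ.le h

lemma sum_log_combo_le {k : ℕ} {s t : Fin k → ℝ} (hs : ∀ i, 0 < s i) (ht : ∀ i, 0 < t i)
    {α β : ℝ} (hα : 0 < α) (hβ : 0 < β) (h : α + β = 1) :
    α * ∑ i, Real.log (s i) + β * ∑ i, Real.log (t i)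
      ≤ ∑ i, Real.log ((α • s + β • t) i) := by
  rw [Finset.mul_sum, Finset.mul_sum, ← Finset.sum_add_distrib]
  exact Finset.sum_le_sum fun i _ => log_combo_le (hs i) (ht i) hα hβ h

lemma sum_log_combo_lt {k : ℕ} {s t : Fin k → ℝ} (hs : ∀ i, 0 < s i) (ht : ∀ i, 0 < t i)
    (hst : s ≠ t) {α β : ℝ} (hα : 0 < α) (hβ : 0 < β) (h : α + β = 1) :
    α * ∑ i, Real.log (s i) + β * ∑ i, Real.log (t i)
      < ∑ i, Real.log ((α • s + β • t) i) := by
  obtain ⟨j, hj⟩ := Function.ne_iff.1 hst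
  rw [Finset.mul_sum, Finset.mul_sum, ← Finset.sum_add_distrib]
  exact Finset.sum_lt_sum (fun i _ => log_combo_le (hs i) (ht i) hα hβ h)
    ⟨j, Finset.mem_univ j, strictConcaveOn_log_Ioi.2 (hs j) (ht j) hj hα hβ h⟩

/-- The augmented-Lagrangian barrier merit function `L_δ(·,·;θ,ν)` is strictly convex on
`ℝⁿ × ℝ₊₊ᵖ`. Squared Euclidean norms are written with the dot product. -/
theorem merit_strictly_convex
    (n m p : ℕ)
    (Q : Matrix (Fin n) (Fin n) ℝ) (hQ : Q.PosSemidef)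
    (q : Fin n → ℝ)
    (A : Matrix (Fin m) (Fin n) ℝ) (b : Fin m → ℝ)
    (G : Matrix (Fin p) (Fin n) ℝ) (d : Fin p → ℝ)
    (θx : Fin n → ℝ) (θy : Fin m → ℝ) (θz : Fin p → ℝ)
    (δx δy δz : ℝ) (hδx : 0 < δx) (hδy : 0 < δy) (hδz : 0 < δz)
    (ν : ℝ) (hν : 0 < ν)
    (L : (Fin n → ℝ) × (Fin p → ℝ) → ℝ)
    (hL : ∀ x : Fin n → ℝ, ∀ s : Fin p → ℝ, L (x, s) =
      (1 / 2) * (x ⬝ᵥ Q.mulVec x) + q ⬝ᵥ x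
      + θy ⬝ᵥ (A.mulVec x - b)
      + θz ⬝ᵥ (G.mulVec x - d + s)
      + (δx / 2) * ((x - θx) ⬝ᵥ (x - θx))
      + (1 / (2 * δy)) * ((A.mulVec x - b) ⬝ᵥ (A.mulVec x - b))
      + (1 / (2 * δz)) * ((G.mulVec x - d + s) ⬝ᵥ (G.mulVec x - d + s))
      - ν * ∑ i, Real.log (s i)) :
    StrictConvexOn ℝ {w : (Fin n → ℝ) × (Fin p → ℝ) | ∀ i, 0 < w.2 i} L := by
  refine ⟨?_, ?_⟩
  · intro w hw w' hw' α β hα hβ h i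
    exact convex_Ioi (0 : ℝ) (hw i) (hw' i) hα hβ h
  rintro ⟨x, s⟩ hs ⟨x', s'⟩ hs' hne α β hα hβ h
  have hs : ∀ i, 0 < s i := hs
  have hs' : ∀ i, 0 < s' i := hs'
  simp only [Prod.smul_mk, Prod.mk_add_mk, hL, smul_eq_mul]
  -- The shifts by constants are compatible with the combination because `α + β = 1`.
  have hc : ∀ {k : ℕ} (c : Fin k → ℝ), c = α • c + β • c := fun c => by
    rw [← add_smul, h, one_smul]
  have eX : α • x + β • x' - θx = α • (x - θx) + β • (x' - θx) := by
    conv_lhs => rw [hc θx]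
    module
  have eA : A.mulVec (α • x + β • x') - b
      = α • (A.mulVec x - b) + β • (A.mulVec x' - b) := by
    conv_lhs => rw [hc b, mulVec_add, mulVec_smul, mulVec_smul]
    module
  have eG : G.mulVec (α • x + β • x') - d + (α • s + β • s')
      = α • (G.mulVec x - d + s) + β • (G.mulVec x' - d + s') := by
    conv_lhs => rw [hc d, mulVec_add, mulVec_smul, mulVec_smul]
    module
  have hlin : ∀ {k : ℕ} (c u v : Fin k → ℝ),
      c ⬝ᵥ (α • u + β • v) = α * (c ⬝ᵥ u) + β * (c ⬝ᵥ v) := fun c u v => by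
    simp only [dotProduct_add, dotProduct_smul, smul_eq_mul]
  rw [eX, eA, eG, hlin q, hlin θy, hlin θz]
  have tQ : (α • x + β • x') ⬝ᵥ Q.mulVec (α • x + β • x')
      ≤ α * (x ⬝ᵥ Q.mulVec x) + β * (x' ⬝ᵥ Q.mulVec x') := by
    rw [quad_combo Q x x' h]
    have hq : 0 ≤ (x - x') ⬝ᵥ Q.mulVec (x - x') := by
      simpa using hQ.dotProduct_mulVec_nonneg (x - x')
    have := mul_nonneg (mul_pos hα hβ).le hq
    linarith
  have tA := mul_le_mul_of_nonneg_left
    (dot_self_combo_le (A.mulVec x - b) (A.mulVec x' - b) hα hβ h)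
    (show 0 ≤ 1 / (2 * δy) by positivity)
  have tG := mul_le_mul_of_nonneg_left
    (dot_self_combo_le (G.mulVec x - d + s) (G.mulVec x' - d + s') hα hβ h)
    (show 0 ≤ 1 / (2 * δz) by positivity)
  by_cases hx : x = x'
  · have hss : s ≠ s' := fun hss => hne (by rw [hx, hss])
    have tX := mul_le_mul_of_nonneg_left
      (dot_self_combo_le (x - θx) (x' - θx) hα hβ h) (half_pos hδx).le
    have tS := mul_lt_mul_of_pos_left (sum_log_combo_lt hs hs' hss hα hβ h) hν
    linarith
  · have tX := mul_lt_mul_of_pos_left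
      (dot_self_combo_lt (u := x - θx) (v := x' - θx) (fun e => hx (sub_left_injective e))
        hα hβ h) (half_pos hδx)
    have tS := mul_le_mul_of_nonneg_left (sum_log_combo_le hs hs' hα hβ h) hν.le
    linarith
end

section
/- Let Q be a symmetric positive semidefinite n×n real matrix, q ∈ ℝⁿ, A ∈ ℝ^{m×n}, b ∈ ℝᵐ, G ∈ ℝ^{p×n}, d ∈ ℝᵖ. Fix θ = (θ_x,θ_y,θ_z) ∈ ℝⁿ×ℝᵐ×ℝᵖ, δ = (δ_x,δ_y,δ_z) with δ_x,δ_y,δ_z > 0, and ν > 0. Then the merit function L_δ(·,·;θ,ν) attains its infimum over ℝⁿ × ℝ₊₊ᵖ, and the minimizer (x,s) is unique; in particular every component of s is strictly positive. -/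
open Matrix

/-!
The merit function is a convex quadratic in `(x, s)` plus the log barrier, and both halves of the
claim come from the two proximal terms `δx / 2 * ‖x - θx‖²` and `1 / (2 * δz) * ‖G x - d + s‖²`.

*Existence.* Young's inequality absorbs every linear term, and `‖s‖²` is controlled by `‖x‖²`,
`‖G x - d + s‖²` and a constant, so `L (x, s) ≥ c ‖x‖² + c ‖s‖² - ν ∑ log sᵢ - C` for some `c > 0`
(`merit_lower_bound`). This separates into coordinates; in each of them `c t² - ν log t` tends to
`+∞` at `0` and at `∞`. Hence a sublevel set of `L` is contained in a compact box on which every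
`sᵢ` stays away from `0` (`sublevel_subset_box`), and `L` is continuous there.

*Uniqueness.* At the midpoint of two minimizers the convexity gap of `L` is at least
`δx / 8 * ‖x - y‖² + 1 / (8 * δz) * ‖(G x + s) - (G y + t)‖²`; minimality makes it nonpositive,
which forces `x = y` and then `s = t`.
-/

/-- Young's inequality for the dot product. -/
lemma young_dotProduct {k : ℕ} (u v : Fin k → ℝ) {a : ℝ} (ha : 0 < a) :
    -(a * (v ⬝ᵥ v)) - 1 / (4 * a) * (u ⬝ᵥ u) ≤ u ⬝ᵥ v := by
  simp only [dotProduct, Finset.mul_sum]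
  rw [← Finset.sum_neg_distrib, ← Finset.sum_sub_distrib]
  refine Finset.sum_le_sum fun i _ => ?_
  have h : u i * v i - (-(a * (v i * v i)) - 1 / (4 * a) * (u i * u i))
      = a * (v i + u i / (2 * a)) ^ 2 := by
    field_simp
    ring
  have : 0 ≤ a * (v i + u i / (2 * a)) ^ 2 := by positivity
  linarith

lemma dotProduct_self_nonneg_real {k : ℕ} (v : Fin k → ℝ) : 0 ≤ v ⬝ᵥ v :=
  Finset.sum_nonneg fun i _ => mul_self_nonneg (v i)

/-- The squared Euclidean norm of `G x` is at most a constant times that of `x`; the constant is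
the squared Frobenius norm of `G`. -/
lemma exists_mulVec_bound {p n : ℕ} (G : Matrix (Fin p) (Fin n) ℝ) :
    ∃ γ : ℝ, 0 ≤ γ ∧ ∀ x : Fin n → ℝ, G.mulVec x ⬝ᵥ G.mulVec x ≤ γ * (x ⬝ᵥ x) := by
  refine ⟨∑ i, G i ⬝ᵥ G i, Finset.sum_nonneg fun i _ => dotProduct_self_nonneg_real _,
    fun x => ?_⟩
  rw [Finset.sum_mul]
  refine Finset.sum_le_sum fun i _ => ?_
  have h := Finset.sum_mul_sq_le_sq_mul_sq Finset.univ (G i) x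
  simpa only [mulVec, dotProduct, sq] using h

/-- Coercivity: up to a constant, the quadratic part of the merit function dominates a positive
multiple of `‖x‖² + ‖s‖²`. -/
lemma merit_lower_bound {n m p : ℕ}
    (Q : Matrix (Fin n) (Fin n) ℝ) (hQ : Q.PosSemidef) (q : Fin n → ℝ)
    (A : Matrix (Fin m) (Fin n) ℝ) (b : Fin m → ℝ)
    (G : Matrix (Fin p) (Fin n) ℝ) (d : Fin p → ℝ)
    (θx : Fin n → ℝ) (θy : Fin m → ℝ) (θz : Fin p → ℝ)
    (δx δy δz : ℝ) (hδx : 0 < δx) (hδy : 0 < δy) (hδz : 0 < δz) :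
    ∃ c C : ℝ, 0 < c ∧ ∀ (x : Fin n → ℝ) (s : Fin p → ℝ),
      c * (x ⬝ᵥ x) + c * (s ⬝ᵥ s) - C ≤
      (1 / 2) * (x ⬝ᵥ Q.mulVec x) + q ⬝ᵥ x
      + θy ⬝ᵥ (A.mulVec x - b)
      + θz ⬝ᵥ (G.mulVec x - d + s)
      + (δx / 2) * ((x - θx) ⬝ᵥ (x - θx))
      + (1 / (2 * δy)) * ((A.mulVec x - b) ⬝ᵥ (A.mulVec x - b))
      + (1 / (2 * δz)) * ((G.mulVec x - d + s) ⬝ᵥ (G.mulVec x - d + s)) := by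
  obtain ⟨γ, hγ, hG⟩ := exists_mulVec_bound G
  -- `c` is small enough for `3 c ‖r‖²` and `(1 + 3 γ) c ‖x‖²` to be absorbed, where
  -- `r = G x - d + s`.
  obtain ⟨c, hc, hc1, hc2⟩ : ∃ c : ℝ, 0 < c ∧ 3 * c ≤ 1 / (4 * δz) ∧
      c * (1 + 3 * γ) ≤ δx / 8 := by
    refine ⟨min (1 / (4 * δz) / 3) (δx / 8 / (1 + 3 * γ)), by positivity, ?_, ?_⟩
    · linarith [min_le_left (1 / (4 * δz) / 3) (δx / 8 / (1 + 3 * γ))]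
    · rw [← le_div_iff₀ (by positivity)]
      exact min_le_right _ _
  refine ⟨c, 1 / (4 * (δx / 8)) * (q ⬝ᵥ q) + 1 / (4 * (1 / (2 * δy))) * (θy ⬝ᵥ θy)
    + 1 / (4 * (1 / (4 * δz))) * (θz ⬝ᵥ θz) + δx / 2 * (θx ⬝ᵥ θx) + 3 * c * (d ⬝ᵥ d), hc,
    fun x s => ?_⟩
  have hQx : 0 ≤ x ⬝ᵥ Q.mulVec x := by simpa using hQ.dotProduct_mulVec_nonneg x
  have h1 := young_dotProduct q x (a := δx / 8) (by positivity)
  have h2 := young_dotProduct θy (A.mulVec x - b) (a := 1 / (2 * δy)) (by positivity)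
  have h3 := young_dotProduct θz (G.mulVec x - d + s) (a := 1 / (4 * δz)) (by positivity)
  have h4 : x ⬝ᵥ x ≤ 2 * ((x - θx) ⬝ᵥ (x - θx)) + 2 * (θx ⬝ᵥ θx) := by
    simp only [dotProduct, Finset.mul_sum, ← Finset.sum_add_distrib, Pi.sub_apply]
    exact Finset.sum_le_sum fun i _ => by nlinarith [sq_nonneg (x i - 2 * θx i)]
  have h5 : s ⬝ᵥ s ≤ 3 * ((G.mulVec x - d + s) ⬝ᵥ (G.mulVec x - d + s))
      + 3 * (G.mulVec x ⬝ᵥ G.mulVec x) + 3 * (d ⬝ᵥ d) := by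
    generalize G.mulVec x = g
    simp only [dotProduct, Finset.mul_sum, ← Finset.sum_add_distrib, Pi.sub_apply, Pi.add_apply]
    refine Finset.sum_le_sum fun i _ => ?_
    nlinarith [sq_nonneg ((g i - d i + s i) + g i), sq_nonneg ((g i - d i + s i) - d i),
      sq_nonneg (g i + d i)]
  have h6 := hG x
  have h4' := mul_le_mul_of_nonneg_left h4 (show 0 ≤ δx / 4 by positivity)
  have h5' := mul_le_mul_of_nonneg_left h5 hc.le
  have h6' := mul_le_mul_of_nonneg_left h6 hc.le
  have h7 := mul_le_mul_of_nonneg_right hc1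
    (dotProduct_self_nonneg_real (G.mulVec x - d + s))
  have h8 := mul_le_mul_of_nonneg_right hc2 (dotProduct_self_nonneg_real x)
  have h9 : 1 / (2 * δz) * ((G.mulVec x - d + s) ⬝ᵥ (G.mulVec x - d + s))
      = 2 * (1 / (4 * δz) * ((G.mulVec x - d + s) ⬝ᵥ (G.mulVec x - d + s))) := by
    field_simp
    ring
  rw [h9]
  linarith

/-- The separable lower bound confines its sublevel sets to a box bounded away from `s = 0`. -/
lemma sublevel_subset_box (n p : ℕ) {c ν : ℝ} (hc : 0 < c) (hν : 0 < ν) (B : ℝ) :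
    ∃ R ε : ℝ, 0 < ε ∧ ∀ (x : Fin n → ℝ) (s : Fin p → ℝ), (∀ i, 0 < s i) →
      c * (x ⬝ᵥ x) + c * (s ⬝ᵥ s) - ν * ∑ i, Real.log (s i) ≤ B →
      (∀ j, x j ∈ Set.Icc (-R) R) ∧ ∀ i, s i ∈ Set.Icc ε R := by
  -- `-M` bounds `t ↦ c t² - ν t`, hence also `t ↦ c t² - ν log t`, from below.
  obtain ⟨M, hM0, hM⟩ : ∃ M : ℝ, 0 ≤ M ∧ ∀ t : ℝ, -M ≤ c * t ^ 2 - ν * t := by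
    refine ⟨ν ^ 2 / (4 * c), by positivity, fun t => ?_⟩
    have h : c * t ^ 2 - ν * t + ν ^ 2 / (4 * c) = c * (t - ν / (2 * c)) ^ 2 := by
      field_simp
      ring
    have : 0 ≤ c * (t - ν / (2 * c)) ^ 2 := by positivity
    linarith
  have hlog : ∀ t : ℝ, 0 < t → c * t ^ 2 - ν * t ≤ c * t ^ 2 - ν * Real.log t := fun t ht => by
    have := mul_le_mul_of_nonneg_left
      ((Real.log_le_sub_one_of_pos ht).trans (sub_le_self t zero_le_one)) hν.le
    linarith
  set D : ℝ := |B| + p * M with hD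
  have hD0 : 0 ≤ D := by positivity
  refine ⟨(D + ν) / c + 1, Real.exp (-(D / ν)), Real.exp_pos _, fun x s hs h => ?_⟩
  have hsplit : c * (s ⬝ᵥ s) - ν * ∑ i, Real.log (s i)
      = ∑ i, (c * s i ^ 2 - ν * Real.log (s i)) := by
    simp only [dotProduct, Finset.mul_sum, ← Finset.sum_sub_distrib, sq]
  have hterm : ∀ i, -M ≤ c * s i ^ 2 - ν * Real.log (s i) := fun i =>
    (hM _).trans (hlog _ (hs i))
  have hB := le_abs_self B
  have hRsq : ∀ t : ℝ, c * t ^ 2 - ν * t ≤ D → t ≤ (D + ν) / c + 1 := fun t ht => by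
    by_contra! hlt
    have h1 : D + ν < c * t := by
      have : (D + ν) / c < t := by linarith
      rwa [div_lt_iff₀ hc, mul_comm] at this
    have h2 : 1 < t := lt_of_le_of_lt (by simp; positivity) hlt
    nlinarith
  constructor
  · intro j
    have hj : x j ^ 2 ≤ x ⬝ᵥ x := by
      rw [sq]
      exact Finset.single_le_sum (f := fun i => x i * x i)
        (fun i _ => mul_self_nonneg (x i)) (Finset.mem_univ j)
    have hsum : -(p * M) ≤ ∑ i, (c * s i ^ 2 - ν * Real.log (s i)) := by
      have := Finset.card_nsmul_le_sum Finset.univ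
        (fun i => c * s i ^ 2 - ν * Real.log (s i)) (-M) fun i _ => hterm i
      simpa using this
    have hxD : c * x j ^ 2 ≤ D := by
      have := mul_le_mul_of_nonneg_left hj hc.le
      linarith
    have habs : |x j| ≤ (D + ν) / c + 1 := by
      refine hRsq _ ?_
      rw [sq_abs]
      have := mul_nonneg hν.le (abs_nonneg (x j))
      linarith
    exact abs_le.mp habs
  · intro i
    have hxx : 0 ≤ c * (x ⬝ᵥ x) := mul_nonneg hc.le (dotProduct_self_nonneg_real x)
    -- Shifting every summand by `M` makes it nonnegative, so one summand is bounded by the sum.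
    have hi : c * s i ^ 2 - ν * Real.log (s i) + M ≤ B + p * M := by
      have h1 := Finset.single_le_sum (f := fun i => c * s i ^ 2 - ν * Real.log (s i) + M)
        (fun i _ => by linarith [hterm i]) (Finset.mem_univ i)
      simp only [Finset.sum_add_distrib, Finset.sum_const, Finset.card_univ, Fintype.card_fin,
        nsmul_eq_mul] at h1
      linarith
    have hiD : c * s i ^ 2 - ν * Real.log (s i) ≤ D := by linarith
    refine ⟨?_, hRsq _ ((hlog _ (hs i)).trans hiD)⟩
    rw [← Real.le_log_iff_exp_le (hs i), neg_le, le_div_iff₀ hν]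
    have : 0 ≤ c * s i ^ 2 := by positivity
    linarith

lemma dotProduct_midpoint {k : ℕ} (u v : Fin k → ℝ) :
    ((1 / 2 : ℝ) • (u + v)) ⬝ᵥ ((1 / 2 : ℝ) • (u + v))
      = (u ⬝ᵥ u + v ⬝ᵥ v) / 2 - (u - v) ⬝ᵥ (u - v) / 4 := by
  simp only [smul_dotProduct, dotProduct_smul, add_dotProduct, dotProduct_add, sub_dotProduct,
    dotProduct_sub, smul_eq_mul]
  ring

lemma log_midpoint {a b : ℝ} (ha : 0 < a) (hb : 0 < b) :
    (Real.log a + Real.log b) / 2 ≤ Real.log ((1 / 2) * (a + b)) := by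
  have h := Real.log_le_log (mul_pos ha hb)
    (show a * b ≤ ((1 / 2) * (a + b)) ^ 2 by nlinarith [sq_nonneg (a - b)])
  rw [Real.log_mul ha.ne' hb.ne', Real.log_pow] at h
  push_cast at h
  linarith

/-- The merit function `L_δ(·,·;θ,ν)` attains its infimum over `ℝⁿ × ℝ₊₊ᵖ` at a unique
minimizer `(x,s)`; in particular every component of `s` is strictly positive
(which is part of membership in `ℝⁿ × ℝ₊₊ᵖ`). -/
theorem merit_has_unique_minimizer
    (n m p : ℕ)
    (Q : Matrix (Fin n) (Fin n) ℝ) (hQ : Q.PosSemidef)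
    (q : Fin n → ℝ)
    (A : Matrix (Fin m) (Fin n) ℝ) (b : Fin m → ℝ)
    (G : Matrix (Fin p) (Fin n) ℝ) (d : Fin p → ℝ)
    (θx : Fin n → ℝ) (θy : Fin m → ℝ) (θz : Fin p → ℝ)
    (δx δy δz : ℝ) (hδx : 0 < δx) (hδy : 0 < δy) (hδz : 0 < δz)
    (ν : ℝ) (hν : 0 < ν)
    (L : (Fin n → ℝ) × (Fin p → ℝ) → ℝ)
    (hL : ∀ x : Fin n → ℝ, ∀ s : Fin p → ℝ, L (x, s) =
      (1 / 2) * (x ⬝ᵥ Q.mulVec x) + q ⬝ᵥ x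
      + θy ⬝ᵥ (A.mulVec x - b)
      + θz ⬝ᵥ (G.mulVec x - d + s)
      + (δx / 2) * ((x - θx) ⬝ᵥ (x - θx))
      + (1 / (2 * δy)) * ((A.mulVec x - b) ⬝ᵥ (A.mulVec x - b))
      + (1 / (2 * δz)) * ((G.mulVec x - d + s) ⬝ᵥ (G.mulVec x - d + s))
      - ν * ∑ i, Real.log (s i)) :
    ∃! w : (Fin n → ℝ) × (Fin p → ℝ),
      (∀ i, 0 < w.2 i) ∧
      ∀ w' : (Fin n → ℝ) × (Fin p → ℝ), (∀ i, 0 < w'.2 i) → L w ≤ L w' := by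
  have hex : ∃ w : (Fin n → ℝ) × (Fin p → ℝ), (∀ i, 0 < w.2 i) ∧
      ∀ w' : (Fin n → ℝ) × (Fin p → ℝ), (∀ i, 0 < w'.2 i) → L w ≤ L w' := by
    obtain ⟨c, C, hc, hlow⟩ :=
      merit_lower_bound Q hQ q A b G d θx θy θz δx δy δz hδx hδy hδz
    obtain ⟨R, ε, hε, hbox⟩ := sublevel_subset_box n p hc hν (L (0, 1) + C)
    have hmem : ∀ w : (Fin n → ℝ) × (Fin p → ℝ), (∀ i, 0 < w.2 i) → L w ≤ L (0, 1) →
        w ∈ (Set.univ.pi fun _ => Set.Icc (-R) R) ×ˢ (Set.univ.pi fun _ => Set.Icc ε R) := by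
      rintro ⟨x, s⟩ hs hle
      have h1 := hlow x s
      have h2 := hL x s
      obtain ⟨hx, hs'⟩ := hbox x s hs (by linarith)
      exact ⟨fun j _ => hx j, fun i _ => hs' i⟩
    have h0 := hmem (0, 1) (fun i => by simp) le_rfl
    have hcompact : IsCompact ((Set.univ.pi fun _ : Fin n => Set.Icc (-R) R) ×ˢ
        (Set.univ.pi fun _ : Fin p => Set.Icc ε R)) :=
      (isCompact_univ_pi fun _ => isCompact_Icc).prod (isCompact_univ_pi fun _ => isCompact_Icc)
    have hcont : ContinuousOn L ((Set.univ.pi fun _ : Fin n => Set.Icc (-R) R) ×ˢ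
        (Set.univ.pi fun _ : Fin p => Set.Icc ε R)) := by
      rw [show L = fun w => _ from funext fun w => hL w.1 w.2]
      refine ContinuousOn.sub (Continuous.continuousOn (by fun_prop)) (continuousOn_const.mul ?_)
      refine continuousOn_finsetSum _ fun i _ => ContinuousOn.log (by fun_prop) fun w hw => ?_
      exact (hε.trans_le (hw.2 i trivial).1).ne'
    obtain ⟨w, hw, hmin⟩ := hcompact.exists_isMinOn ⟨_, h0⟩ hcont
    refine ⟨w, fun i => hε.trans_le (hw.2 i trivial).1, fun w' hw' => ?_⟩
    rcases le_total (L w') (L (0, 1)) with h | h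
    · exact hmin (hmem w' hw' h)
    · exact (hmin h0).trans h
  refine existsUnique_of_exists_of_unique hex ?_
  rintro ⟨x, s⟩ ⟨y, t⟩ ⟨hs, hxs⟩ ⟨ht, hyt⟩
  have hpos : ∀ i, 0 < ((1 / 2 : ℝ) • (s + t)) i := fun i => by
    simpa using add_pos (hs i) (ht i)
  have k1 := hxs ((1 / 2 : ℝ) • (x + y), (1 / 2 : ℝ) • (s + t)) hpos
  have k2 := hyt ((1 / 2 : ℝ) • (x + y), (1 / 2 : ℝ) • (s + t)) hpos
  have hlog : (∑ i, Real.log (s i) + ∑ i, Real.log (t i)) / 2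
      ≤ ∑ i, Real.log (((1 / 2 : ℝ) • (s + t)) i) := by
    rw [← Finset.sum_add_distrib, Finset.sum_div]
    exact Finset.sum_le_sum fun i _ => by simpa using log_midpoint (hs i) (ht i)
  have hlog' := mul_le_mul_of_nonneg_left hlog hν.le
  have hQm : ((1 / 2 : ℝ) • (x + y)) ⬝ᵥ Q.mulVec ((1 / 2 : ℝ) • (x + y))
      ≤ (x ⬝ᵥ Q.mulVec x + y ⬝ᵥ Q.mulVec y) / 2 := by
    have h : 0 ≤ (x - y) ⬝ᵥ Q.mulVec (x - y) := by simpa using hQ.dotProduct_mulVec_nonneg (x - y)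
    simp only [mulVec_sub, mulVec_smul, mulVec_add, smul_dotProduct, dotProduct_smul,
      add_dotProduct, dotProduct_add, sub_dotProduct, dotProduct_sub, smul_eq_mul] at h ⊢
    linarith
  -- The three affine residuals at the midpoint are the midpoints of the residuals.
  have ex : (1 / 2 : ℝ) • (x + y) - θx = (1 / 2 : ℝ) • ((x - θx) + (y - θx)) := by module
  have eA : A.mulVec ((1 / 2 : ℝ) • (x + y)) - b
      = (1 / 2 : ℝ) • ((A.mulVec x - b) + (A.mulVec y - b)) := by
    rw [mulVec_smul, mulVec_add]
    module
  have eG : G.mulVec ((1 / 2 : ℝ) • (x + y)) - d + (1 / 2 : ℝ) • (s + t)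
      = (1 / 2 : ℝ) • ((G.mulVec x - d + s) + (G.mulVec y - d + t)) := by
    rw [mulVec_smul, mulVec_add]
    module
  rw [hL, hL, ex, eA, eG, dotProduct_midpoint, dotProduct_midpoint, dotProduct_midpoint,
    dotProduct_smul, dotProduct_smul, dotProduct_smul, dotProduct_add q, dotProduct_add θy,
    dotProduct_add θz (G.mulVec x - d + s) (G.mulVec y - d + t)] at k1 k2
  simp only [smul_eq_mul] at k1 k2
  have nA := mul_nonneg (show 0 ≤ 1 / (2 * δy) by positivity)
    (dotProduct_self_nonneg_real (A.mulVec x - b - (A.mulVec y - b)))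
  have nx := dotProduct_self_nonneg_real (x - θx - (y - θx))
  have nG := dotProduct_self_nonneg_real (G.mulVec x - d + s - (G.mulVec y - d + t))
  have nx' := mul_nonneg (show 0 ≤ δx / 2 by positivity) nx
  have nG' := mul_nonneg (show 0 ≤ 1 / (2 * δz) by positivity) nG
  have zx : δx / 2 * ((x - θx - (y - θx)) ⬝ᵥ (x - θx - (y - θx))) = 0 := by linarith
  have zG : 1 / (2 * δz) * ((G.mulVec x - d + s - (G.mulVec y - d + t)) ⬝ᵥ
      (G.mulVec x - d + s - (G.mulVec y - d + t))) = 0 := by linarith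
  have hx : x = y := by
    have h := dotProduct_self_eq_zero.mp ((mul_eq_zero.mp zx).resolve_left (by positivity))
    simpa [sub_eq_zero] using h
  have hst : s = t := by
    have h := dotProduct_self_eq_zero.mp ((mul_eq_zero.mp zG).resolve_left (by positivity))
    subst hx
    simpa [sub_eq_zero] using h
  rw [hx, hst]
end

section
/- Let Q be a symmetric positive semidefinite n×n real matrix, q ∈ ℝⁿ, A ∈ ℝ^{m×n}, b ∈ ℝᵐ, G ∈ ℝ^{p×n}, d ∈ ℝᵖ, and fix θ = (θ_x,θ_y,θ_z), δ = (δ_x,δ_y,δ_z) with δ_x,δ_y,δ_z > 0, and ν > 0. Then the primal-dual augmented Lagrangian M_δ(·,·,·,·;θ,ν) is strictly convex on the convex set ℝⁿ × ℝ₊₊ᵖ × ℝᵐ × ℝᵖ. -/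
open Matrix

/-!
Along a segment with weights `a + c = 1`, a quadratic form evaluated at a convex combination falls
short of the convex combination of its values by exactly `a * c` times its value at the difference
of the endpoints (`quad_combo`, `sq_combo`). Every summand of the merit function is therefore
convex: the `Q`-term since `Q` is positive semidefinite, the linear terms trivially, the squares of
affine maps by `sq_combo`, and the barrier by concavity of `log`.

Strictness comes from four of the squares. With `dx, ds, dy, dz` the differences of the endpoints,
their gaps are positive multiples of `‖dx‖²`, `‖G dx + ds‖²`, `‖A dx - δy dy‖²` and
`‖G dx + ds - δz dz‖²`. If all of them vanish then `dx = 0`, hence `ds = 0`, `dy = 0` and `dz = 0`,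
so the endpoints agree. The barrier is only used through its (weak) convexity.
-/

/-- The convexity gap of a quadratic form; no symmetry of `Q` is needed. -/
lemma quad_combo_s9 {ι : Type*} [Fintype ι] (Q : Matrix ι ι ℝ) (u v : ι → ℝ) {a c : ℝ}
    (hac : a + c = 1) :
    (a • u + c • v) ⬝ᵥ Q.mulVec (a • u + c • v)
      = a * (u ⬝ᵥ Q.mulVec u) + c * (v ⬝ᵥ Q.mulVec v)
        - a * c * ((u - v) ⬝ᵥ Q.mulVec (u - v)) := by
  obtain rfl : c = 1 - a := by linarith
  simp only [mulVec_add, mulVec_sub, mulVec_smul, dotProduct_add, add_dotProduct, dotProduct_sub,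
    sub_dotProduct, dotProduct_smul, smul_dotProduct, smul_eq_mul]
  ring

lemma sq_combo {ι : Type*} [Fintype ι] {w u v : ι → ℝ} {a c : ℝ}
    (hac : a + c = 1) (hw : w = a • u + c • v) :
    w ⬝ᵥ w = a * (u ⬝ᵥ u) + c * (v ⬝ᵥ v) - a * c * ((u - v) ⬝ᵥ (u - v)) := by
  classical
  subst hw
  simpa using quad_combo_s9 (1 : Matrix ι ι ℝ) u v hac

lemma lin_combo {ι : Type*} [Fintype ι] (t : ι → ℝ) {w u v : ι → ℝ} {a c : ℝ}
    (hw : w = a • u + c • v) : t ⬝ᵥ w = a * (t ⬝ᵥ u) + c * (t ⬝ᵥ v) := by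
  subst hw
  simp [dotProduct_add, dotProduct_smul]

lemma sum_log_combo {ι : Type*} [Fintype ι] {s t : ι → ℝ} (hs : ∀ i, 0 < s i)
    (ht : ∀ i, 0 < t i) {a c : ℝ} (ha : 0 < a) (hc : 0 < c) (hac : a + c = 1) :
    a * ∑ i, Real.log (s i) + c * ∑ i, Real.log (t i)
      ≤ ∑ i, Real.log ((a • s + c • t) i) := by
  rw [Finset.mul_sum, Finset.mul_sum, ← Finset.sum_add_distrib]
  refine Finset.sum_le_sum fun i _ => ?_
  simpa using strictConcaveOn_log_Ioi.concaveOn.2 (hs i) (ht i) ha.le hc.le hac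

lemma dot_self_nonneg_s9 {ι : Type*} [Fintype ι] (v : ι → ℝ) : 0 ≤ v ⬝ᵥ v :=
  Finset.sum_nonneg fun i _ => mul_self_nonneg (v i)

/-- The primal-dual augmented Lagrangian `M_δ(·,·,·,·;θ,ν)` is strictly convex on
`ℝⁿ × ℝ₊₊ᵖ × ℝᵐ × ℝᵖ`. -/
theorem primal_dual_aug_lagrangian_strictly_convex
    (n m p : ℕ)
    (Q : Matrix (Fin n) (Fin n) ℝ) (hQ : Q.PosSemidef)
    (q : Fin n → ℝ)
    (A : Matrix (Fin m) (Fin n) ℝ) (b : Fin m → ℝ)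
    (G : Matrix (Fin p) (Fin n) ℝ) (d : Fin p → ℝ)
    (θx : Fin n → ℝ) (θy : Fin m → ℝ) (θz : Fin p → ℝ)
    (δx δy δz : ℝ) (hδx : 0 < δx) (hδy : 0 < δy) (hδz : 0 < δz)
    (ν : ℝ) (hν : 0 < ν)
    (L : (Fin n → ℝ) → (Fin p → ℝ) → ℝ)
    (hL : ∀ x s, L x s =
      (1 / 2) * (x ⬝ᵥ Q.mulVec x) + q ⬝ᵥ x
      + θy ⬝ᵥ (A.mulVec x - b)
      + θz ⬝ᵥ (G.mulVec x - d + s)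
      + (δx / 2) * ((x - θx) ⬝ᵥ (x - θx))
      + (1 / (2 * δy)) * ((A.mulVec x - b) ⬝ᵥ (A.mulVec x - b))
      + (1 / (2 * δz)) * ((G.mulVec x - d + s) ⬝ᵥ (G.mulVec x - d + s))
      - ν * ∑ i, Real.log (s i))
    (M : (Fin n → ℝ) × (Fin p → ℝ) × (Fin m → ℝ) × (Fin p → ℝ) → ℝ)
    (hM : ∀ x s y z, M (x, s, y, z) =
      L x s
      + (1 / (2 * δy)) *
          ((A.mulVec x - b + δy • (θy - y)) ⬝ᵥ (A.mulVec x - b + δy • (θy - y)))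
      + (1 / (2 * δz)) *
          ((G.mulVec x - d + s + δz • (θz - z)) ⬝ᵥ (G.mulVec x - d + s + δz • (θz - z)))) :
    StrictConvexOn ℝ
      {w : (Fin n → ℝ) × (Fin p → ℝ) × (Fin m → ℝ) × (Fin p → ℝ) | ∀ i, 0 < w.2.1 i}
      M := by
  refine ⟨?_, ?_⟩
  · intro w hw w' hw' a c ha hc hac i
    have h := convex_Ioi (0 : ℝ) (hw i) (hw' i) ha hc hac
    simpa using h
  rintro ⟨x, s, y, z⟩ hw ⟨x', s', y', z'⟩ hw' hne a c ha hc hac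
  have hs : ∀ i, 0 < s i := hw
  have hs' : ∀ i, 0 < s' i := hw'
  simp only [Prod.smul_mk, Prod.mk_add_mk, smul_eq_mul, hM, hL]
  obtain rfl : c = 1 - a := by linarith
  -- Each affine map commutes with the convex combination.
  have eA : A.mulVec (a • x + (1 - a) • x') - b
      = a • (A.mulVec x - b) + (1 - a) • (A.mulVec x' - b) := by
    rw [mulVec_add, mulVec_smul, mulVec_smul]; module
  have eG : G.mulVec (a • x + (1 - a) • x') - d + (a • s + (1 - a) • s')
      = a • (G.mulVec x - d + s) + (1 - a) • (G.mulVec x' - d + s') := by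
    rw [mulVec_add, mulVec_smul, mulVec_smul]; module
  have ex : a • x + (1 - a) • x' - θx = a • (x - θx) + (1 - a) • (x' - θx) := by module
  have eAy : A.mulVec (a • x + (1 - a) • x') - b + δy • (θy - (a • y + (1 - a) • y'))
      = a • (A.mulVec x - b + δy • (θy - y)) + (1 - a) • (A.mulVec x' - b + δy • (θy - y')) := by
    rw [eA]; module
  have eGz : G.mulVec (a • x + (1 - a) • x') - d + (a • s + (1 - a) • s')
        + δz • (θz - (a • z + (1 - a) • z'))
      = a • (G.mulVec x - d + s + δz • (θz - z))
        + (1 - a) • (G.mulVec x' - d + s' + δz • (θz - z')) := by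
    rw [eG]; module
  have hlog := mul_le_mul_of_nonneg_left (sum_log_combo hs hs' ha hc hac) hν.le
  have hQ0 : 0 ≤ (x - x') ⬝ᵥ Q.mulVec (x - x') := by
    simpa using hQ.dotProduct_mulVec_nonneg (x - x')
  rw [sq_combo hac eAy, sq_combo hac eGz, sq_combo hac eA, sq_combo hac eG, sq_combo hac ex,
    lin_combo θy eA, lin_combo θz eG, lin_combo q rfl, quad_combo_s9 Q x x' hac]
  have nA := dot_self_nonneg_s9 (A.mulVec x - b - (A.mulVec x' - b))
  have nG := dot_self_nonneg_s9 (G.mulVec x - d + s - (G.mulVec x' - d + s'))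
  have nx := dot_self_nonneg_s9 (x - θx - (x' - θx))
  have nAy := dot_self_nonneg_s9
    (A.mulVec x - b + δy • (θy - y) - (A.mulVec x' - b + δy • (θy - y')))
  have nGz := dot_self_nonneg_s9
    (G.mulVec x - d + s + δz • (θz - z) - (G.mulVec x' - d + s' + δz • (θz - z')))
  -- The gaps of the four squares that determine the endpoints cannot all vanish.
  have key : (x - θx - (x' - θx)) ⬝ᵥ (x - θx - (x' - θx)) ≠ 0 ∨
      (G.mulVec x - d + s - (G.mulVec x' - d + s')) ⬝ᵥ
        (G.mulVec x - d + s - (G.mulVec x' - d + s')) ≠ 0 ∨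
      (A.mulVec x - b + δy • (θy - y) - (A.mulVec x' - b + δy • (θy - y'))) ⬝ᵥ
        (A.mulVec x - b + δy • (θy - y) - (A.mulVec x' - b + δy • (θy - y'))) ≠ 0 ∨
      (G.mulVec x - d + s + δz • (θz - z) - (G.mulVec x' - d + s' + δz • (θz - z'))) ⬝ᵥ
        (G.mulVec x - d + s + δz • (θz - z) - (G.mulVec x' - d + s' + δz • (θz - z'))) ≠ 0 := by
    by_contra! h
    simp only [dotProduct_self_eq_zero, sub_eq_zero] at h
    obtain ⟨h1, h2, h3, h4⟩ := h
    obtain rfl : x = x' := sub_left_injective h1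
    obtain rfl : s = s' := add_left_cancel h2
    obtain rfl : y = y' :=
      sub_right_injective (smul_right_injective _ hδy.ne' (add_left_cancel h3))
    obtain rfl : z = z' :=
      sub_right_injective (smul_right_injective _ hδz.ne' (add_left_cancel h4))
    exact hne rfl
  generalize (x - θx - (x' - θx)) ⬝ᵥ (x - θx - (x' - θx)) = Px at *
  generalize (A.mulVec x - b - (A.mulVec x' - b)) ⬝ᵥ (A.mulVec x - b - (A.mulVec x' - b)) = PA at *
  generalize (G.mulVec x - d + s - (G.mulVec x' - d + s')) ⬝ᵥ
        (G.mulVec x - d + s - (G.mulVec x' - d + s')) = PG at *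
  generalize (A.mulVec x - b + δy • (θy - y) - (A.mulVec x' - b + δy • (θy - y'))) ⬝ᵥ
        (A.mulVec x - b + δy • (θy - y) - (A.mulVec x' - b + δy • (θy - y'))) = PAy at *
  generalize (G.mulVec x - d + s + δz • (θz - z) - (G.mulVec x' - d + s' + δz • (θz - z'))) ⬝ᵥ
        (G.mulVec x - d + s + δz • (θz - z) - (G.mulVec x' - d + s' + δz • (θz - z'))) = PGz at *
  generalize (x - x') ⬝ᵥ Q.mulVec (x - x') = PQ at *
  have gap : 0 < a * (1 - a) * (1 / 2 * PQ + δx / 2 * Px + 1 / (2 * δy) * PA + 1 / (2 * δz) * PG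
      + 1 / (2 * δy) * PAy + 1 / (2 * δz) * PGz) := by
    refine mul_pos (mul_pos ha hc) ?_
    rcases key with h | h | h | h
    · have := nx.lt_of_ne' h
      positivity
    · have := nG.lt_of_ne' h
      positivity
    · have := nAy.lt_of_ne' h
      positivity
    · have := nGz.lt_of_ne' h
      positivity
  linear_combination gap + hlog
end

section
/- Let Q be a symmetric positive semidefinite n×n real matrix, q ∈ ℝⁿ, A ∈ ℝ^{m×n}, b ∈ ℝᵐ, G ∈ ℝ^{p×n}, d ∈ ℝᵖ, and fix θ = (θ_x,θ_y,θ_z), δ = (δ_x,δ_y,δ_z) with δ_x,δ_y,δ_z > 0, and ν > 0. Then (x*,s*,y*,z*) ∈ ℝⁿ × ℝ₊₊ᵖ × ℝᵐ × ℝᵖ is a global minimizer of M_δ(·,·,·,·;θ,ν) over ℝⁿ × ℝ₊₊ᵖ × ℝᵐ × ℝᵖ if and only if (x*,s*) is a global minimizer of L_δ(·,·;θ,ν) over ℝⁿ × ℝ₊₊ᵖ and y* = θ_y + (Ax* − b)/δ_y, z* = θ_z + (Gx* − d + s*)/δ_z. -/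
/-! The function `M` is `L` plus two nonnegative quadratic penalties, and for every `(x, s)`
both penalties vanish exactly at the multiplier updates
`y = θy + (A x - b) / δy`, `z = θz + (G x - d + s) / δz`. Hence minimizing `M` over `(y, z)` with
`(x, s)` fixed returns `L x s`, attained only at those multipliers. -/

open Matrix

/-- The penalty residual vanishes exactly at the multiplier update. -/
lemma residual_eq_zero_iff {k : ℕ} {δ : ℝ} (hδ : 0 < δ) (r θ y : Fin k → ℝ) :
    r + δ • (θ - y) = 0 ↔ y = θ + (1 / δ) • r := by
  simp only [funext_iff, Pi.add_apply, Pi.smul_apply, Pi.sub_apply, Pi.zero_apply, smul_eq_mul]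
  refine forall_congr' fun i => ?_
  field_simp
  constructor <;> intro h <;> linarith

lemma penalty_nonneg {k : ℕ} {δ : ℝ} (hδ : 0 < δ) (v : Fin k → ℝ) :
    0 ≤ (1 / (2 * δ)) * (v ⬝ᵥ v) :=
  mul_nonneg (by positivity) (Finset.sum_nonneg fun i _ => mul_self_nonneg (v i))

lemma penalty_eq_zero {k : ℕ} {δ : ℝ} (hδ : 0 < δ) {v : Fin k → ℝ}
    (h : (1 / (2 * δ)) * (v ⬝ᵥ v) = 0) : v = 0 :=
  dotProduct_self_eq_zero.1 ((mul_eq_zero.1 h).resolve_left (by positivity))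

/-- `(x*,s*,y*,z*)` globally minimizes the primal-dual augmented Lagrangian `M` over
`ℝⁿ × ℝ₊₊ᵖ × ℝᵐ × ℝᵖ` iff `(x*,s*)` globally minimizes the merit function `L` over
`ℝⁿ × ℝ₊₊ᵖ` and `(y*,z*)` are the augmented-Lagrangian multiplier updates. -/
theorem primal_dual_minimizer_characterization
    (n m p : ℕ)
    (Q : Matrix (Fin n) (Fin n) ℝ) (hQ : Q.PosSemidef)
    (q : Fin n → ℝ)
    (A : Matrix (Fin m) (Fin n) ℝ) (b : Fin m → ℝ)
    (G : Matrix (Fin p) (Fin n) ℝ) (d : Fin p → ℝ)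
    (θx : Fin n → ℝ) (θy : Fin m → ℝ) (θz : Fin p → ℝ)
    (δx δy δz : ℝ) (hδx : 0 < δx) (hδy : 0 < δy) (hδz : 0 < δz)
    (ν : ℝ) (hν : 0 < ν)
    (L : (Fin n → ℝ) → (Fin p → ℝ) → ℝ)
    (hL : ∀ x s, L x s =
      (1 / 2) * (x ⬝ᵥ Q.mulVec x) + q ⬝ᵥ x
      + θy ⬝ᵥ (A.mulVec x - b)
      + θz ⬝ᵥ (G.mulVec x - d + s)
      + (δx / 2) * ((x - θx) ⬝ᵥ (x - θx))
      + (1 / (2 * δy)) * ((A.mulVec x - b) ⬝ᵥ (A.mulVec x - b))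
      + (1 / (2 * δz)) * ((G.mulVec x - d + s) ⬝ᵥ (G.mulVec x - d + s))
      - ν * ∑ i, Real.log (s i))
    (M : (Fin n → ℝ) → (Fin p → ℝ) → (Fin m → ℝ) → (Fin p → ℝ) → ℝ)
    (hM : ∀ x s y z, M x s y z =
      L x s
      + (1 / (2 * δy)) *
          ((A.mulVec x - b + δy • (θy - y)) ⬝ᵥ (A.mulVec x - b + δy • (θy - y)))
      + (1 / (2 * δz)) *
          ((G.mulVec x - d + s + δz • (θz - z)) ⬝ᵥ (G.mulVec x - d + s + δz • (θz - z))))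
    (xs : Fin n → ℝ) (ss : Fin p → ℝ) (hss : ∀ i, 0 < ss i)
    (ys : Fin m → ℝ) (zs : Fin p → ℝ) :
    (∀ (x : Fin n → ℝ) (s : Fin p → ℝ) (y : Fin m → ℝ) (z : Fin p → ℝ),
        (∀ i, 0 < s i) → M xs ss ys zs ≤ M x s y z) ↔
    ((∀ (x : Fin n → ℝ) (s : Fin p → ℝ), (∀ i, 0 < s i) → L xs ss ≤ L x s) ∧
      ys = θy + (1 / δy) • (A.mulVec xs - b) ∧
      zs = θz + (1 / δz) • (G.mulVec xs - d + ss)) := by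
  have hge : ∀ x s y z, L x s ≤ M x s y z := fun x s y z => by
    rw [hM]
    linarith [penalty_nonneg hδy (A.mulVec x - b + δy • (θy - y)),
      penalty_nonneg hδz (G.mulVec x - d + s + δz • (θz - z))]
  have hopt : ∀ x s, M x s (θy + (1 / δy) • (A.mulVec x - b))
      (θz + (1 / δz) • (G.mulVec x - d + s)) = L x s := fun x s => by
    rw [hM, (residual_eq_zero_iff hδy _ _ _).2 rfl, (residual_eq_zero_iff hδz _ _ _).2 rfl]
    simp
  constructor
  · intro h
    refine ⟨fun x s hs =>
      (hge xs ss ys zs).trans ((h x s _ _ hs).trans_eq (hopt x s)), ?_⟩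
    -- Comparing with the updates at the same `(xs, ss)` forces both penalties to vanish.
    have h1 := (h xs ss _ _ hss).trans_eq (hopt xs ss)
    rw [hM] at h1
    have h2 := penalty_nonneg hδy (A.mulVec xs - b + δy • (θy - ys))
    have h3 := penalty_nonneg hδz (G.mulVec xs - d + ss + δz • (θz - zs))
    exact ⟨(residual_eq_zero_iff hδy _ _ _).1 (penalty_eq_zero hδy (by linarith)),
      (residual_eq_zero_iff hδz _ _ _).1 (penalty_eq_zero hδz (by linarith))⟩
  · rintro ⟨h, rfl, rfl⟩ x s y z hs
    rw [hopt]
    exact (h x s hs).trans (hge x s y z)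
end

section
/- Let Q be a symmetric positive semidefinite n×n real matrix, A ∈ ℝ^{m×n}, G ∈ ℝ^{p×n}, let δ_x, δ_y, δ_z > 0, and let s, z ∈ ℝᵖ have all components strictly positive. Then the (n+p+m+p)×(n+p+m+p) block matrix K = [[Q + δ_x I_n, 0, Aᵀ, Gᵀ], [0, diag(z), 0, diag(s)], [A, 0, −δ_y I_m, 0], [G, I_p, 0, −δ_z I_p]] is invertible, where I_k denotes the k×k identity matrix and diag(v) the diagonal matrix with diagonal v. -/
/-! A kernel vector `(x, σ, y, ζ)` of the matrix vanishes by an energy argument. Pairing the first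
block row with `x` and substituting `A x = δy y` and `G x = δz ζ - σ` gives
`xᵀ Q x + δx ‖x‖² + δy ‖y‖² + δz ‖ζ‖² - σᵀ ζ = 0`. The complementarity row `zᵢ σᵢ + sᵢ ζᵢ = 0`
with `s, z > 0` makes `σᵢ ζᵢ ≤ 0`, so every term is nonnegative and hence zero; this kills
`x`, `y`, `ζ`, and then `σ = δz ζ - G x = 0`. A square matrix with trivial kernel is invertible. -/

open Matrix

/-- The Newton system matrix of the regularized primal-dual interior-point method is
invertible whenever `Q` is symmetric positive semidefinite, `δ_x, δ_y, δ_z > 0` and the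
iterates `s, z` are componentwise strictly positive. The blocks are indexed by
`(Fin n ⊕ Fin p) ⊕ (Fin m ⊕ Fin p)`, matching the order `(x, s, y, z)`. -/
theorem newton_system_matrix_invertible
    (n m p : ℕ)
    (Q : Matrix (Fin n) (Fin n) ℝ) (hQ : Q.PosSemidef)
    (A : Matrix (Fin m) (Fin n) ℝ)
    (G : Matrix (Fin p) (Fin n) ℝ)
    (δx δy δz : ℝ) (hδx : 0 < δx) (hδy : 0 < δy) (hδz : 0 < δz)
    (s z : Fin p → ℝ) (hs : ∀ i, 0 < s i) (hz : ∀ i, 0 < z i)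
    (K : Matrix ((Fin n ⊕ Fin p) ⊕ (Fin m ⊕ Fin p))
                ((Fin n ⊕ Fin p) ⊕ (Fin m ⊕ Fin p)) ℝ)
    (hK : K = fromBlocks
      (fromBlocks (Q + δx • (1 : Matrix (Fin n) (Fin n) ℝ)) 0 0 (diagonal z))
      (fromBlocks Aᵀ Gᵀ 0 (diagonal s))
      (fromBlocks A 0 G (1 : Matrix (Fin p) (Fin p) ℝ))
      (fromBlocks (-(δy • (1 : Matrix (Fin m) (Fin m) ℝ))) 0
                  0 (-(δz • (1 : Matrix (Fin p) (Fin p) ℝ))))) :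
    IsUnit K := by
  rw [← mulVec_injective_iff_isUnit, ← coe_mulVecLin, ← LinearMap.ker_eq_bot,
    LinearMap.ker_eq_bot']
  intro w hw
  obtain ⟨x, σ, y, ζ, rfl⟩ : ∃ x σ y ζ, w = Sum.elim (Sum.elim x σ) (Sum.elim y ζ) :=
    ⟨fun i => w (.inl (.inl i)), fun i => w (.inl (.inr i)), fun i => w (.inr (.inl i)),
      fun i => w (.inr (.inr i)), by ext ((i | i) | (i | i)) <;> rfl⟩
  rw [mulVecLin_apply, hK] at hw
  have h1 : (Q *ᵥ x + δx • x) + (Aᵀ *ᵥ y + Gᵀ *ᵥ ζ) = 0 := by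
    ext i
    simpa [fromBlocks_mulVec, add_mulVec, smul_mulVec] using congrFun hw (.inl (.inl i))
  have h2 : ∀ i, z i * σ i + s i * ζ i = 0 := by
    intro i
    simpa [fromBlocks_mulVec, mulVec_diagonal] using congrFun hw (.inl (.inr i))
  have h3 : A *ᵥ x = δy • y := by
    ext i
    have := congrFun hw (.inr (.inl i))
    simp [fromBlocks_mulVec, neg_mulVec, smul_mulVec] at this
    simp; linarith
  have h4 : G *ᵥ x = δz • ζ - σ := by
    ext i
    have := congrFun hw (.inr (.inr i))
    simp [fromBlocks_mulVec, neg_mulVec, smul_mulVec] at this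
    simp; linarith
  have energy : x ⬝ᵥ Q *ᵥ x + δx * (x ⬝ᵥ x) + δy * (y ⬝ᵥ y) + δz * (ζ ⬝ᵥ ζ) - σ ⬝ᵥ ζ = 0 := by
    have h := congrArg (fun v => x ⬝ᵥ v) h1
    simp only [dotProduct_add, dotProduct_smul, dotProduct_zero, dotProduct_mulVec x Aᵀ,
      dotProduct_mulVec x Gᵀ, vecMul_transpose, h3, h4, sub_dotProduct, smul_dotProduct,
      smul_eq_mul] at h
    linarith
  have hσζ : σ ⬝ᵥ ζ ≤ 0 := by
    refine Finset.sum_nonpos fun i _ => ?_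
    have h : z i * (σ i * ζ i) = -(s i * (ζ i * ζ i)) := by linear_combination ζ i * h2 i
    have h' : 0 ≤ s i * (ζ i * ζ i) := mul_nonneg (hs i).le (mul_self_nonneg _)
    exact nonpos_of_mul_nonpos_right (by linarith) (hz i)
  have hQx : 0 ≤ x ⬝ᵥ Q *ᵥ x := by simpa using hQ.dotProduct_mulVec_nonneg x
  have nn : ∀ {k : ℕ} (v : Fin k → ℝ), 0 ≤ v ⬝ᵥ v := fun v =>
    Finset.sum_nonneg fun i _ => mul_self_nonneg (v i)
  have hx' := mul_nonneg hδx.le (nn x)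
  have hy' := mul_nonneg hδy.le (nn y)
  have hζ' := mul_nonneg hδz.le (nn ζ)
  have zero_of : ∀ {k : ℕ} (v : Fin k → ℝ) (δ : ℝ), 0 < δ → δ * (v ⬝ᵥ v) = 0 → v = 0 :=
    fun v δ hδ h => dotProduct_self_eq_zero.1 ((mul_eq_zero.1 h).resolve_left hδ.ne')
  obtain rfl : x = 0 := zero_of x δx hδx (by linarith)
  obtain rfl : y = 0 := zero_of y δy hδy (by linarith)
  obtain rfl : ζ = 0 := zero_of ζ δz hδz (by linarith)
  obtain rfl : σ = 0 := by simpa using h4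
  ext ((i | i) | (i | i)) <;> rfl
end
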